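/- arXiv:2003.11442 — 2 statements merged into one kernel-verified Lean document; each statement's English description precedes it below -/
import Mathlib

section
/- Let (k_n) be a sequence of positive integers with k_n = ω(1), let (s_n) be an increasing sequence of positive real numbers with s_n = o(√k_n), and let (Y_n) be real-valued random variables for which there exists a constant C ∈ (0,∞) such that P[|Y_n − 1| > t] ≤ 2·exp(−C·t·√k_n) for every n ∈ ℕ and every t > 0 (this is the concentration inequality which the KLS conjecture would imply for Y_n = ‖ξ_n‖₂/√k_n with ξ_n an isotropic log-concave random vector in ℝ^{k_n}). If (Y_n) satisfies a large deviations principle with speed s_n and rate function 𝕀, then 𝕀 is the singular rate function 𝕀₀, i.e. 𝕀(1) = 0 and 𝕀(x) = +∞ for every x ≠ 1. (This is the content of Theorem A, case (a): an MDP at speed s_n = o(√k_n) with non-singular rate function for normalized Euclidean norms of isotropic log-concave random vectors would disprove the KLS conjecture.) -/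
open MeasureTheory ProbabilityTheory Filter Real Set

noncomputable section

/-- A sequence of (Borel) measures `ν n` on `E` satisfies a large deviations principle
with speed `s` and rate function `I`. -/
def HasLDP {E : Type*} [TopologicalSpace E] [MeasurableSpace E]
    (ν : ℕ → Measure E) (s : ℕ → ℝ) (I : E → EReal) : Prop :=
  (∀ x, 0 ≤ I x) ∧ LowerSemicontinuous I ∧
    (∀ c : ℝ, IsCompact {x | I x ≤ (c : EReal)}) ∧
    ∀ A : Set E, MeasurableSet A →
      (-(⨅ x ∈ interior A, I x) ≤
          Filter.liminf (fun n => (((s n)⁻¹ : ℝ) : EReal) * ENNReal.log (ν n A)) Filter.atTop) ∧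
      (Filter.limsup (fun n => (((s n)⁻¹ : ℝ) : EReal) * ENNReal.log (ν n A)) Filter.atTop ≤
        -(⨅ x ∈ closure A, I x))

/-!
Away from `1` the concentration inequality bounds the probability of `{y | |y - 1| > t}` by
`2 exp (-C t √(k n))`, which is super-exponentially small on the scale `s n = o(√(k n))`
(`tendsto_scaled_exponent`).  The LDP lower bound on this open set then forces the rate function to
be `⊤` on it, and `t = |x - 1| / 2` reaches every `x ≠ 1`.  The LDP upper bound on the whole line
gives `inf I = 0`, and this infimum can only be attained at `1`.  No growth of `s n` is needed.
-/

/-- The concentration exponent, divided by the speed `s n`, diverges to `-∞` when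
`s n = o(√(k n))`. -/
lemma tendsto_scaled_exponent {k : ℕ → ℕ} (hkpos : ∀ n, 0 < k n)
    (hkomega : Tendsto (fun n => (k n : ℝ)) atTop atTop)
    {s : ℕ → ℝ} (hs_pos : ∀ n, 0 < s n)
    (hs_small : Tendsto (fun n => s n / Real.sqrt (k n)) atTop (nhds 0))
    {c : ℝ} (hc : 0 < c) :
    Tendsto (fun n => (s n)⁻¹ * (Real.log 2 - c * Real.sqrt (k n))) atTop atBot := by
  have hk : ∀ n, 0 < Real.sqrt (k n) := fun n => Real.sqrt_pos.2 (by exact_mod_cast hkpos n)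
  have h1 : Tendsto (fun n => (s n / Real.sqrt (k n))⁻¹) atTop atTop :=
    Tendsto.inv_tendsto_nhdsGT_zero (tendsto_nhdsWithin_iff.2
      ⟨hs_small, Eventually.of_forall fun n => div_pos (hs_pos n) (hk n)⟩)
  have h2 : Tendsto (fun n => Real.log 2 / Real.sqrt (k n) - c) atTop (nhds (0 - c)) :=
    ((tendsto_const_nhds.div_atTop (Real.tendsto_sqrt_atTop.comp hkomega))).sub
      tendsto_const_nhds
  refine (h1.atTop_mul_neg (by linarith : (0 : ℝ) - c < 0) h2).congr fun n => ?_
  have := (hk n).ne'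
  have := (hs_pos n).ne'
  field_simp

/-- **Theorem A, case (a)**: if the normalized Euclidean norms `Y n` of isotropic log-concave
random vectors (more precisely, any random variables satisfying the concentration inequality
implied by the KLS conjecture) satisfy an LDP with speed `s n = o(√(k n))`, then the rate
function must be the singular one `𝕀₀`. -/
theorem ldp_subcritical_speed_rate_function_singular
    {Ω : Type*} [MeasurableSpace Ω] (P : Measure Ω) [IsProbabilityMeasure P]
    (k : ℕ → ℕ) (hkpos : ∀ n, 0 < k n)
    (hkomega : Tendsto (fun n => (k n : ℝ)) atTop atTop)
    (s : ℕ → ℝ) (hs_pos : ∀ n, 0 < s n) (hs_mono : StrictMono s)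
    (hs_small : Tendsto (fun n => s n / Real.sqrt (k n)) atTop (nhds 0))
    (Y : ℕ → Ω → ℝ) (hY : ∀ n, Measurable (Y n))
    (C : ℝ) (hC : 0 < C)
    (hconc : ∀ n, ∀ t : ℝ, 0 < t →
      P {ω | |Y n ω - 1| > t} ≤ ENNReal.ofReal (2 * Real.exp (-C * t * Real.sqrt (k n))))
    (I : ℝ → EReal) (hLDP : HasLDP (fun n => P.map (Y n)) s I) :
    I 1 = 0 ∧ ∀ x : ℝ, x ≠ 1 → I x = ⊤ := by
  obtain ⟨hnonneg, -, -, hA⟩ := hLDP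
  have htop : ∀ x : ℝ, x ≠ 1 → I x = ⊤ := by
    intro x hx
    have hd : 0 < |x - 1| := abs_pos.2 (sub_ne_zero.2 hx)
    set t := |x - 1| / 2 with ht
    have htpos : 0 < t := by positivity
    let A : Set ℝ := {y | |y - 1| > t}
    have hopen : IsOpen A := isOpen_lt continuous_const (by fun_prop)
    have hle : ∀ n, (((s n)⁻¹ : ℝ) : EReal) * ENNReal.log ((P.map (Y n)) A) ≤
        (((s n)⁻¹ * (Real.log 2 - C * t * Real.sqrt (k n)) : ℝ) : EReal) := by
      intro n
      rw [EReal.coe_mul]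
      refine mul_le_mul_of_nonneg_left ?_ (by exact_mod_cast (inv_pos.2 (hs_pos n)).le)
      rw [Measure.map_apply (hY n) hopen.measurableSet]
      refine (ENNReal.log_monotone (hconc n t htpos)).trans ?_
      rw [ENNReal.log_ofReal_of_pos (by positivity),
        Real.log_mul (by norm_num) (Real.exp_pos _).ne', Real.log_exp]
      exact le_of_eq (by congr 1; ring)
    have hbot : Tendsto (fun n =>
        (((s n)⁻¹ * (Real.log 2 - C * t * Real.sqrt (k n)) : ℝ) : EReal)) atTop (nhds ⊥) :=
      EReal.tendsto_coe_nhds_bot_iff.2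
        (tendsto_scaled_exponent hkpos hkomega hs_pos hs_small (mul_pos hC htpos))
    have hlow := ((hA A hopen.measurableSet).1.trans
      (liminf_le_liminf (Eventually.of_forall hle))).trans_eq hbot.liminf_eq
    rw [hopen.interior_eq, le_bot_iff, EReal.neg_eq_bot_iff] at hlow
    have hxA : x ∈ A := show t < |x - 1| by linarith
    exact top_le_iff.1 (hlow ▸ iInf₂_le x hxA)
  refine ⟨le_antisymm ?_ (hnonneg 1), htop⟩
  have hup := (hA univ MeasurableSet.univ).2
  have hone : ∀ n, (P.map (Y n)) univ = 1 := fun n => by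
    rw [Measure.map_apply (hY n) MeasurableSet.univ, preimage_univ, measure_univ]
  simp only [hone, ENNReal.log_one, mul_zero, limsup_const, closure_univ, mem_univ,
    iInf_pos] at hup
  have hinf : I 1 ≤ ⨅ x, I x := le_iInf fun x => by
    by_cases hx : x = 1
    · rw [hx]
    · rw [htop x hx]; exact le_top
  refine hinf.trans ?_
  simpa using EReal.le_neg_of_le_neg hup
end
end

section
/- Let (k_n) be a sequence of positive integers with k_n = ω(1), let (s_n) be an increasing sequence of positive real numbers with c₁·√k_n ≤ s_n ≤ c₂·√k_n for absolute constants 0 < c₁ ≤ c₂ < ∞, and let (Y_n) be real-valued random variables for which there exists a constant C ∈ (0,∞) such that P[|Y_n − 1| > t] ≤ 2·exp(−C·t·√k_n) for every n ∈ ℕ and every t > 0 (the concentration inequality which the KLS conjecture would imply for Y_n = ‖ξ_n‖₂/√k_n with ξ_n isotropic log-concave in ℝ^{k_n}). If (Y_n) satisfies a large deviations principle with speed s_n and rate function 𝕀, then for every t₀ ∈ (1,∞) one has inf_{t > t₀} ( inf_{x ∈ (t,∞)} 𝕀(x) )/t > 0. (This is the content of Theorem A, case (b): an LDP at speed comparable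 to √k_n whose rate function satisfies inf_{t>t₀} inf_{x∈(t,∞)} 𝕀(x)/t = 0 for some t₀ > 1 would disprove the KLS conjecture.) -/
/-!
The ray `Ioi t` is open, so the lower bound of the LDP gives
`-inf_{(t, ∞)} I ≤ liminf s_n⁻¹ log P[Y_n > t]`. For `t > 1`, the concentration inequality and
`s_n ≤ c₂ √k_n` bound the right-hand side by `s_n⁻¹ log 2 - C (t - 1) / c₂`
(`scaled_log_tail_le`), and `s_n → ∞` removes the first term. Hence
`inf_{(t, ∞)} I ≥ C (t - 1) / c₂`, and division by `t > t₀` leaves at least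
`C (1 - t₀⁻¹) / c₂ > 0`, uniformly in `t`.
-/

open MeasureTheory ProbabilityTheory Filter Real Set

noncomputable section

/-- An exponential tail bound `p ≤ 2 exp (-C u r)`, rescaled by a speed `s ≤ c r`. -/
lemma scaled_log_tail_le {p : ENNReal} {s r c C u : ℝ} (hs : 0 < s) (hc : 0 < c) (hC : 0 < C)
    (hu : 0 < u) (hsr : s ≤ c * r) (hp : p ≤ ENNReal.ofReal (2 * Real.exp (-C * u * r))) :
    ((s⁻¹ : ℝ) : EReal) * ENNReal.log p ≤ ((s⁻¹ * Real.log 2 - C * u / c : ℝ) : EReal) := by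
  have h1 : ENNReal.log p ≤ ((Real.log 2 + -C * u * r : ℝ) : EReal) := by
    refine (ENNReal.log_monotone hp).trans_eq ?_
    rw [ENNReal.log_ofReal_of_pos (by positivity),
      Real.log_mul two_ne_zero (Real.exp_ne_zero _), Real.log_exp]
  refine (mul_le_mul_of_nonneg_left h1 (EReal.coe_nonneg.2 (inv_nonneg.2 hs.le))).trans ?_
  rw [← EReal.coe_mul, EReal.coe_le_coe_iff]
  have h2 : C * u / c ≤ s⁻¹ * (C * u * r) := by
    rw [inv_mul_eq_div, div_le_div_iff₀ hc hs]
    nlinarith [mul_le_mul_of_nonneg_left hsr (mul_pos hC hu).le]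
  linarith

/-- **Theorem A, case (b)**: if random variables `Y n` satisfying the concentration inequality
implied by the KLS conjecture satisfy an LDP with speed `s n ≈ √(k n)`, then for every
`t₀ ∈ (1, ∞)` one has `inf_{t > t₀} (inf_{x ∈ (t, ∞)} 𝕀(x)) / t > 0`. -/
theorem ldp_critical_speed_rate_function_grows_linearly
    {Ω : Type*} [MeasurableSpace Ω] (P : Measure Ω) [IsProbabilityMeasure P]
    (k : ℕ → ℕ) (hkpos : ∀ n, 0 < k n)
    (hkomega : Tendsto (fun n => (k n : ℝ)) atTop atTop)
    (s : ℕ → ℝ) (hs_pos : ∀ n, 0 < s n) (hs_mono : StrictMono s)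
    (c₁ c₂ : ℝ) (hc₁ : 0 < c₁) (hc₁c₂ : c₁ ≤ c₂)
    (hs_comp : ∀ n, c₁ * Real.sqrt (k n) ≤ s n ∧ s n ≤ c₂ * Real.sqrt (k n))
    (Y : ℕ → Ω → ℝ) (hY : ∀ n, Measurable (Y n))
    (C : ℝ) (hC : 0 < C)
    (hconc : ∀ n, ∀ t : ℝ, 0 < t →
      P {ω | |Y n ω - 1| > t} ≤ ENNReal.ofReal (2 * Real.exp (-C * t * Real.sqrt (k n))))
    (I : ℝ → EReal) (hLDP : HasLDP (fun n => P.map (Y n)) s I) :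
    ∀ t₀ : ℝ, 1 < t₀ →
      0 < ⨅ t ∈ Set.Ioi t₀, ((t⁻¹ : ℝ) : EReal) * ⨅ x ∈ Set.Ioi t, I x := by
  intro t₀ ht₀
  have hc₂ : 0 < c₂ := hc₁.trans_le hc₁c₂
  have hs_top : Tendsto s atTop atTop :=
    tendsto_atTop_mono (fun n => (hs_comp n).1)
      ((Real.tendsto_sqrt_atTop.comp hkomega).const_mul_atTop hc₁)
  have hrate : ∀ t : ℝ, 1 < t → ((C * (t - 1) / c₂ : ℝ) : EReal) ≤ ⨅ x ∈ Set.Ioi t, I x := by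
    intro t ht
    have hlow := (hLDP.2.2.2 (Set.Ioi t) measurableSet_Ioi).1
    rw [isOpen_Ioi.interior_eq] at hlow
    have hterm : ∀ n, (((s n)⁻¹ : ℝ) : EReal) * ENNReal.log ((P.map (Y n)) (Set.Ioi t)) ≤
        (((s n)⁻¹ * Real.log 2 - C * (t - 1) / c₂ : ℝ) : EReal) := by
      intro n
      refine scaled_log_tail_le (hs_pos n) hc₂ hC (sub_pos.2 ht) (hs_comp n).2
        (le_trans ?_ (hconc n (t - 1) (sub_pos.2 ht)))
      rw [Measure.map_apply (hY n) measurableSet_Ioi]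
      refine measure_mono fun ω hω => ?_
      have hω' : t < Y n ω := hω
      exact lt_of_lt_of_le (by linarith) (le_abs_self (Y n ω - 1))
    have hlim : Tendsto (fun n => (((s n)⁻¹ * Real.log 2 - C * (t - 1) / c₂ : ℝ) : EReal)) atTop
        (nhds ((-(C * (t - 1) / c₂) : ℝ) : EReal)) := by
      refine EReal.tendsto_coe.2 ?_
      simpa using ((tendsto_inv_atTop_zero.comp hs_top).mul_const (Real.log 2)).sub_const
        (C * (t - 1) / c₂)
    have hle := hlow.trans ((Filter.liminf_le_liminf (Eventually.of_forall hterm)).trans_eq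
      hlim.liminf_eq)
    rw [EReal.coe_neg] at hle
    exact EReal.neg_le_neg_iff.1 hle
  have hpos : 0 < C * (1 - t₀⁻¹) / c₂ :=
    div_pos (mul_pos hC (sub_pos.2 (inv_lt_one_of_one_lt₀ ht₀))) hc₂
  refine (EReal.coe_pos.2 hpos).trans_le (le_iInf₂ fun t ht => ?_)
  have htt : t₀ < t := ht
  have ht0 : 0 < t := by linarith
  refine le_trans ?_ (mul_le_mul_of_nonneg_left (hrate t (ht₀.trans htt))
    (EReal.coe_nonneg.2 (inv_nonneg.2 ht0.le)))
  rw [← EReal.coe_mul, EReal.coe_le_coe_iff]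
  have hinv : t⁻¹ ≤ t₀⁻¹ := inv_anti₀ (by linarith) htt.le
  calc C * (1 - t₀⁻¹) / c₂ ≤ C * (1 - t⁻¹) / c₂ := by gcongr
    _ = t⁻¹ * (C * (t - 1) / c₂) := by field_simp
end
end
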